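/- There is no irreducible braid system s = (β_1, β_2, β_3) ∈ B_3^3 with finite Hurwitz orbit such that, for some permutation (i, j, k) of (1, 2, 3), e(β_i) ≡ 0 (mod 6), e(β_j) ≡ ±2 (mod 6), and e(β_k) ≡ ±2 (mod 6). Consequently, every irreducible (3,3)-periodic braid system with finite Hurwitz orbit satisfies e(β_1) ≡ ±1, e(β_2) ≡ ±1, e(β_3) ≡ ±1 (mod 6). -/

import Mathlib

open FreeGroup in
/-- The braid relations on `m` strands (generators indexed 0-based by `Fin (m-1)`). -/
def braidRels (m : ℕ) : Set (FreeGroup (Fin (m - 1))) :=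
  {r | ∃ i j : Fin (m - 1), (i.val + 2 ≤ j.val ∨ j.val + 2 ≤ i.val) ∧
        r = of i * of j * (of j * of i)⁻¹} ∪
  {r | ∃ i j : Fin (m - 1), (i.val + 1 = j.val ∨ j.val + 1 = i.val) ∧
        r = of i * of j * of i * (of j * of i * of j)⁻¹}

/-- The braid group on `m` strands. -/
abbrev BraidGroup (m : ℕ) := PresentedGroup (braidRels m)

/-- The Artin generator `σ_i` (1-based index `1 ≤ i ≤ m-1`); junk value `1` out of range. -/
def braidGen (m : ℕ) (i : ℕ) : BraidGroup m :=
  if h : 1 ≤ i ∧ i ≤ m - 1 then PresentedGroup.of ⟨i - 1, by omega⟩ else 1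

/-- A braid is periodic if some positive power of it is central. -/
def IsPeriodic {m : ℕ} (β : BraidGroup m) : Prop :=
  ∃ k : ℕ, 1 ≤ k ∧ β ^ k ∈ Subgroup.center (BraidGroup m)

/-- The elementary Hurwitz move at (0-based) position `i`, as a bijection on `n`-tuples. -/
def hEquiv {G : Type*} [Group G] {n : ℕ} (i : Fin (n - 1)) : Equiv.Perm (Fin n → G) where
  toFun s := fun k =>
    if k.val = i.val then s ⟨i.val + 1, by have := i.isLt; omega⟩
    else if k.val = i.val + 1 then
      (s ⟨i.val + 1, by have := i.isLt; omega⟩)⁻¹ * s ⟨i.val, by have := i.isLt; omega⟩ *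
        s ⟨i.val + 1, by have := i.isLt; omega⟩
    else s k
  invFun t := fun k =>
    if k.val = i.val then
      t ⟨i.val, by have := i.isLt; omega⟩ * t ⟨i.val + 1, by have := i.isLt; omega⟩ *
        (t ⟨i.val, by have := i.isLt; omega⟩)⁻¹
    else if k.val = i.val + 1 then t ⟨i.val, by have := i.isLt; omega⟩
    else t k
  left_inv s := by
    funext k
    have hlt := i.isLt
    rcases k with ⟨kv, hkv⟩
    by_cases h1 : kv = i.val
    · subst h1
      simp [mul_assoc]
    · by_cases h2 : kv = i.val + 1
      · subst h2
        simp
      · simp [h1, h2]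
  right_inv t := by
    funext k
    have hlt := i.isLt
    rcases k with ⟨kv, hkv⟩
    by_cases h1 : kv = i.val
    · subst h1
      simp [mul_assoc]
    · by_cases h2 : kv = i.val + 1
      · subst h2
        simp [mul_assoc]
      · simp [h1, h2]

/-- The (right) Hurwitz action of a word in the generators `σ_1, …, σ_{n-1}` of `B_n`
on `n`-tuples of elements of a group `G`: `hurwitzAct (w₁ * w₂) s = hurwitzAct w₂ (hurwitzAct w₁ s)`. -/
def hurwitzAct {G : Type*} [Group G] {n : ℕ} (w : FreeGroup (Fin (n - 1))) (s : Fin n → G) :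
    Fin n → G :=
  (MulOpposite.unop (FreeGroup.lift (fun i => MulOpposite.op (hEquiv (G := G) (n := n) i)) w)) s

/-- The Hurwitz orbit of a braid system. -/
def hurwitzOrbit {G : Type*} [Group G] {n : ℕ} (s : Fin n → G) : Set (Fin n → G) :=
  {t | ∃ w : FreeGroup (Fin (n - 1)), hurwitzAct w s = t}

/-- The generator `σ_i` (1-based) as a word acting on length-`n` systems. -/
def genWord (n : ℕ) (i : ℕ) : FreeGroup (Fin (n - 1)) :=
  if h : 1 ≤ i ∧ i ≤ n - 1 then FreeGroup.of ⟨i - 1, by omega⟩ else 1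

/-- The pure braid word `c_i = (σ_1⁻¹ ⋯ σ_{i-1}⁻¹) σ_i² (σ_{i-1} ⋯ σ_1)`. -/
def cWord (n : ℕ) (i : ℕ) : FreeGroup (Fin (n - 1)) :=
  ((List.range (i - 1)).map (fun t => (genWord n (t + 1))⁻¹)).prod *
    genWord n i ^ 2 *
    ((List.range (i - 1)).reverse.map (fun t => genWord n (t + 1))).prod

/-- The word `Δ_{(i,j)} = (σ_i σ_{i+1} ⋯ σ_j)(σ_i ⋯ σ_{j-1}) ⋯ (σ_i σ_{i+1})(σ_i)`. -/
def deltaWord (n i j : ℕ) : FreeGroup (Fin (n - 1)) :=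
  ((List.range (j - i + 1)).map (fun t =>
    ((List.range (j - t - i + 1)).map (fun u => genWord n (i + u))).prod)).prod

/-- The exponent-sum homomorphism, valued in `Multiplicative ℤ`. -/
def expSumHom {m : ℕ} : BraidGroup m →* Multiplicative ℤ :=
  PresentedGroup.toGroup (f := fun _ => Multiplicative.ofAdd 1) (by
    rintro r (⟨i, j, -, rfl⟩ | ⟨i, j, -, rfl⟩) <;>
      simp <;> group)

/-- The exponent sum of a braid: `e(σ_i) = 1`. -/
def esum {m : ℕ} (β : BraidGroup m) : ℤ := Multiplicative.toAdd (expSumHom β)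

/-- A braid system is reducible if some non-trivial partition of the index set has all
entries from the two parts commuting. -/
def IsReducible {G : Type*} [Group G] {n : ℕ} (s : Fin n → G) : Prop :=
  ∃ I : Set (Fin n), I.Nonempty ∧ Iᶜ.Nonempty ∧ ∀ i ∈ I, ∀ j ∈ Iᶜ, Commute (s i) (s j)

/-- `x ≡ ±2 (mod 6)`. -/
def PMTwo (x : ℤ) : Prop := Int.ModEq 6 x 2 ∨ Int.ModEq 6 x (-2)

/-- `x ≡ ±1 (mod 6)`. -/
def PMOne (x : ℤ) : Prop := Int.ModEq 6 x 1 ∨ Int.ModEq 6 x (-1)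

/-- A degree 3, length 3 braid system is `(3,3)`-periodic if its triple of exponent sums
mod 6 matches one of the patterns `(0,±2,±2)`, `(±2,0,±2)`, `(±2,±2,0)`, `(±1,±1,±1)`. -/
def Is33Periodic (s : Fin 3 → BraidGroup 3) : Prop :=
  (Int.ModEq 6 (esum (s 0)) 0 ∧ PMTwo (esum (s 1)) ∧ PMTwo (esum (s 2))) ∨
  (PMTwo (esum (s 0)) ∧ Int.ModEq 6 (esum (s 1)) 0 ∧ PMTwo (esum (s 2))) ∨
  (PMTwo (esum (s 0)) ∧ PMTwo (esum (s 1)) ∧ Int.ModEq 6 (esum (s 2)) 0) ∨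
  (PMOne (esum (s 0)) ∧ PMOne (esum (s 1)) ∧ PMOne (esum (s 2)))

/-!
Braids in `B₃` commute as soon as their images in `SL(2, ℤ)` under the Burau representation at
`t = -1` do: the kernel is generated by a central braid of exponent sum `12`, while commutators have
exponent sum `0`. On the braids of even exponent sum `e` the representation can be twisted by the
sign `(-1) ^ (e / 2)`, and the resulting image `Γ` does not contain `-1`. Hence the elements of `Γ`
have trace different from `0` and `1`, and an element `M` of `Γ` with trace other than `-1` has the
same centralizer as each of its powers `M ^ k`, `k > 0`.

If a triple `(A, B, C)` in `Γ` has a finite Hurwitz orbit, then pure braids act on it with finite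
order, so a power of `A * B` commutes with `A`; therefore `A` and `B` commute or `A * B` has trace
`-1`, and similarly for the other pairs and for `A * B * C`. For an irreducible triple the trace
identities of `SL(2)` then turn into polynomial equations between the integers `tr A`, `tr B` and
`tr C`, whose solutions all give `tr ⁅A, B⁆ = 2` with `A` or `B` elliptic. This makes `A` and `B`
commute, and the triple is reducible after all. So an irreducible braid system with finite Hurwitz
orbit has an entry of odd exponent sum.
-/

section Hurwitz

variable {G H : Type*} [Group G] [Group H] {n : ℕ} {s t u : Fin n → G}

theorem hurwitzAct_one (s : Fin n → G) : hurwitzAct 1 s = s := by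
  simp [hurwitzAct]

theorem hurwitzAct_mul (v w : FreeGroup (Fin (n - 1))) (s : Fin n → G) :
    hurwitzAct (v * w) s = hurwitzAct w (hurwitzAct v s) := by
  simp [hurwitzAct]

theorem hurwitzAct_pow (w : FreeGroup (Fin (n - 1))) (k : ℕ) (s : Fin n → G) :
    hurwitzAct (w ^ k) s = (hurwitzAct w)^[k] s := by
  induction k generalizing s with
  | zero => exact hurwitzAct_one s
  | succ k ih => rw [pow_succ', hurwitzAct_mul, ih, Function.iterate_succ_apply]

theorem hurwitzAct_of (i : Fin (n - 1)) (s : Fin n → G) :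
    hurwitzAct (.of i) s = hEquiv i s := by
  simp [hurwitzAct]

theorem hurwitzAct_of_inv (i : Fin (n - 1)) (s : Fin n → G) :
    hurwitzAct (.of i)⁻¹ s = (hEquiv i).symm s := by
  simp [hurwitzAct]

theorem hurwitzAct_injective (w : FreeGroup (Fin (n - 1))) :
    Function.Injective (hurwitzAct (G := G) w) :=
  Equiv.injective _

theorem mem_hurwitzOrbit_symm (h : t ∈ hurwitzOrbit s) : s ∈ hurwitzOrbit t := by
  obtain ⟨w, rfl⟩ := h
  exact ⟨w⁻¹, by rw [← hurwitzAct_mul, mul_inv_cancel, hurwitzAct_one]⟩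

theorem hurwitzOrbit_subset_of_mem (h : t ∈ hurwitzOrbit s) :
    hurwitzOrbit t ⊆ hurwitzOrbit s := by
  obtain ⟨v, rfl⟩ := h
  rintro _ ⟨w, rfl⟩
  exact ⟨v * w, hurwitzAct_mul v w s⟩

theorem hEquiv_comp (f : G →* H) (i : Fin (n - 1)) (s : Fin n → G) :
    hEquiv i (f ∘ s) = f ∘ hEquiv i s := by
  funext k
  simp only [hEquiv, Equiv.coe_fn_mk, Function.comp_apply]
  split_ifs <;> simp only [map_mul, map_inv]

theorem hurwitzAct_comp (f : G →* H) (w : FreeGroup (Fin (n - 1))) (s : Fin n → G) :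
    hurwitzAct w (f ∘ s) = f ∘ hurwitzAct w s := by
  induction w using FreeGroup.induction_on generalizing s with
  | C1 => simp only [hurwitzAct_one]
  | of i => simp only [hurwitzAct_of, hEquiv_comp]
  | inv_of i _ =>
    rw [hurwitzAct_of_inv, hurwitzAct_of_inv, Equiv.symm_apply_eq, hEquiv_comp,
      Equiv.apply_symm_apply]
  | mul v w hv hw => simp only [hurwitzAct_mul, hv, hw]

theorem hurwitzOrbit_comp (f : G →* H) (s : Fin n → G) :
    hurwitzOrbit (f ∘ s) = (f ∘ ·) '' hurwitzOrbit s := by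
  ext t
  simp only [hurwitzOrbit, Set.mem_ofPred_eq, Set.mem_image, exists_exists_eq_and, hurwitzAct_comp]

theorem exists_iterate_hurwitzAct_eq (hs : (hurwitzOrbit s).Finite)
    (w : FreeGroup (Fin (n - 1))) : ∃ k > 0, (hurwitzAct w)^[k] s = s := by
  have hmem (k : ℕ) : (hurwitzAct w)^[k] s ∈ hurwitzOrbit s :=
    ⟨w ^ k, hurwitzAct_pow w k s⟩
  obtain ⟨k, l, hkl, heq⟩ := hs.exists_lt_map_eq_of_forall_mem hmem
  exact ⟨l - k, by omega, Function.iterate_cancel (hurwitzAct_injective w) heq.symm⟩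

theorem iterate_apply_eq_conj {ι : Type*} {f : (ι → G) → ι → G} {p : (ι → G) → G} {i : ι}
    (hf : ∀ t, f t i = (p t)⁻¹ * t i * p t) (hp : ∀ t, p (f t) = p t) (k : ℕ) (t : ι → G) :
    f^[k] t i = (p t ^ k)⁻¹ * t i * p t ^ k := by
  induction k generalizing t with
  | zero => simp
  | succ k ih => rw [Function.iterate_succ_apply, ih, hf, hp, pow_succ']; group

theorem exists_pow_commute_of_hurwitzAct_eq_conj {w : FreeGroup (Fin (n - 1))}
    {p : (Fin n → G) → G} {i : Fin n} (hs : (hurwitzOrbit s).Finite)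
    (hconj : ∀ t, hurwitzAct w t i = (p t)⁻¹ * t i * p t)
    (hp : ∀ t, p (hurwitzAct w t) = p t) : ∃ k > 0, Commute (p s ^ k) (s i) := by
  obtain ⟨k, hk, hperiod⟩ := exists_iterate_hurwitzAct_eq hs w
  have hfix := iterate_apply_eq_conj hconj hp k s
  rw [hperiod, mul_assoc, eq_inv_mul_iff_mul_eq] at hfix
  exact ⟨k, hk, hfix⟩

theorem exists_pow_commute_of_adjacent (hs : (hurwitzOrbit s).Finite) {i j : Fin n}
    (hij : i.val + 1 = j.val) : ∃ k > 0, Commute ((s i * s j) ^ k) (s i) := by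
  obtain ⟨i, hi⟩ := i
  obtain ⟨j, hj⟩ := j
  obtain rfl : i + 1 = j := hij
  let l : Fin (n - 1) := ⟨i, by omega⟩
  refine exists_pow_commute_of_hurwitzAct_eq_conj (w := .of l * .of l)
    (p := fun t => t ⟨i, hi⟩ * t ⟨i + 1, hj⟩) hs ?_ ?_ <;> intro t <;>
    simp [l, hurwitzAct_mul, hurwitzAct_of, hEquiv, mul_assoc]

theorem hurwitzAct_of_zero_mul_of_one (s : Fin 3 → G) :
    hurwitzAct (.of (0 : Fin (3 - 1)) * .of (1 : Fin (3 - 1))) s =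
      ![s 1, s 2, (s 1 * s 2)⁻¹ * s 0 * (s 1 * s 2)] := by
  rw [hurwitzAct_mul, hurwitzAct_of, hurwitzAct_of]
  funext k
  fin_cases k <;> simp [hEquiv, mul_assoc]

theorem exists_pow_commute_of_fin_three {s : Fin 3 → G} (hs : (hurwitzOrbit s).Finite)
    (i : Fin 3) : ∃ k > 0, Commute ((s 0 * s 1 * s 2) ^ k) (s i) := by
  refine exists_pow_commute_of_hurwitzAct_eq_conj
    (w := (.of (0 : Fin (3 - 1)) * .of (1 : Fin (3 - 1))) ^ 3)
    (p := fun t => t 0 * t 1 * t 2) hs ?_ ?_ <;> intro t <;>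
    simp only [hurwitzAct_pow, Function.iterate_succ_apply, Function.iterate_zero_apply,
      hurwitzAct_of_zero_mul_of_one]
  · fin_cases i <;> simp [mul_assoc]
  · simp [mul_assoc]

/-- `t` is obtained from `s` by permuting the entries and conjugating each of them by some element
of the subgroup generated by `s`. Hurwitz moves do this, and reducibility is invariant under it. -/
def IsPermConj (s t : Fin n → G) : Prop :=
  ∃ π : Equiv.Perm (Fin n), ∀ k, ∃ g ∈ Subgroup.closure (Set.range s), t (π k) = g⁻¹ * s k * g

theorem IsPermConj.refl (s : Fin n → G) : IsPermConj s s :=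
  ⟨1, fun _ => ⟨1, one_mem _, by simp⟩⟩

theorem IsPermConj.mem_closure (h : IsPermConj s t) (k : Fin n) :
    t k ∈ Subgroup.closure (Set.range s) := by
  obtain ⟨π, hπ⟩ := h
  obtain ⟨g, hg, heq⟩ := hπ (π.symm k)
  rw [Equiv.apply_symm_apply] at heq
  rw [heq]
  exact mul_mem (mul_mem (inv_mem hg) (Subgroup.subset_closure ⟨_, rfl⟩)) hg

theorem IsPermConj.trans (hst : IsPermConj s t) (htu : IsPermConj t u) : IsPermConj s u := by
  have hle : Subgroup.closure (Set.range t) ≤ Subgroup.closure (Set.range s) := by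
    rw [Subgroup.closure_le]
    rintro _ ⟨k, rfl⟩
    exact hst.mem_closure k
  obtain ⟨π, hπ⟩ := hst
  obtain ⟨ρ, hρ⟩ := htu
  refine ⟨ρ * π, fun k => ?_⟩
  obtain ⟨g, hg, hgt⟩ := hπ k
  obtain ⟨h, hh, hhu⟩ := hρ (π k)
  exact ⟨g * h, mul_mem hg (hle hh), by rw [Equiv.Perm.mul_apply, hhu, hgt]; group⟩

theorem isPermConj_hEquiv (i : Fin (n - 1)) (s : Fin n → G) : IsPermConj s (hEquiv i s) := by
  let a : Fin n := ⟨i, by omega⟩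
  let b : Fin n := ⟨i + 1, by omega⟩
  refine ⟨Equiv.swap a b, fun k => ?_⟩
  rcases eq_or_ne k a with rfl | hka
  · exact ⟨s b, Subgroup.subset_closure ⟨b, rfl⟩, by simp [a, b, hEquiv]⟩
  refine ⟨1, one_mem _, ?_⟩
  rcases eq_or_ne k b with rfl | hkb
  · simp [a, b, hEquiv]
  · rw [Equiv.swap_apply_of_ne_of_ne hka hkb]
    simp [hEquiv, show k.val ≠ i by simpa [a, Fin.ext_iff] using hka,
      show k.val ≠ i + 1 by simpa [b, Fin.ext_iff] using hkb]

theorem isPermConj_hEquiv_symm (i : Fin (n - 1)) (s : Fin n → G) :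
    IsPermConj s ((hEquiv i).symm s) := by
  let a : Fin n := ⟨i, by omega⟩
  let b : Fin n := ⟨i + 1, by omega⟩
  refine ⟨Equiv.swap a b, fun k => ?_⟩
  rcases eq_or_ne k b with rfl | hkb
  · exact ⟨(s a)⁻¹, inv_mem (Subgroup.subset_closure ⟨a, rfl⟩), by simp [a, b, hEquiv]⟩
  refine ⟨1, one_mem _, ?_⟩
  rcases eq_or_ne k a with rfl | hka
  · simp [a, b, hEquiv]
  · rw [Equiv.swap_apply_of_ne_of_ne hka hkb]
    simp [hEquiv, show k.val ≠ i by simpa [a, Fin.ext_iff] using hka,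
      show k.val ≠ i + 1 by simpa [b, Fin.ext_iff] using hkb]

theorem isPermConj_of_mem_hurwitzOrbit (h : t ∈ hurwitzOrbit s) : IsPermConj s t := by
  obtain ⟨w, rfl⟩ := h
  induction w using FreeGroup.induction_on generalizing s with
  | C1 => rw [hurwitzAct_one]; exact .refl s
  | of i => rw [hurwitzAct_of]; exact isPermConj_hEquiv i s
  | inv_of i _ => rw [hurwitzAct_of_inv]; exact isPermConj_hEquiv_symm i s
  | mul v w hv hw => rw [hurwitzAct_mul]; exact hv.trans hw

theorem closure_range_le_normalizer_closure_image {I : Set (Fin n)}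
    (hI : ∀ i ∈ I, ∀ j ∈ Iᶜ, Commute (s i) (s j)) :
    Subgroup.closure (Set.range s) ≤ Subgroup.normalizer (Subgroup.closure (s '' I)) := by
  rw [Subgroup.closure_le]
  rintro _ ⟨j, rfl⟩
  by_cases hj : j ∈ I
  · exact Subgroup.le_normalizer (Subgroup.subset_closure ⟨j, hj, rfl⟩)
  · refine Subgroup.centralizer_le_normalizer _ ?_
    rw [Subgroup.centralizer_closure]
    rintro _ ⟨i, hi, rfl⟩
    exact hI i hi j hj

theorem IsReducible.of_isPermConj (hs : IsReducible s) (h : IsPermConj s t) : IsReducible t := by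
  obtain ⟨I, hI, hJ, hcomm⟩ := hs
  obtain ⟨π, hπ⟩ := h
  have mem_closure {K : Set (Fin n)} (hK : ∀ i ∈ K, ∀ j ∈ Kᶜ, Commute (s i) (s j)) {k : Fin n}
      (hk : k ∈ K) : t (π k) ∈ Subgroup.closure (s '' K) := by
    obtain ⟨g, hg, heq⟩ := hπ k
    rw [heq]
    exact (Subgroup.mem_normalizer_iff''.1 (closure_range_le_normalizer_closure_image hK hg) _).1
      (Subgroup.subset_closure ⟨k, hk, rfl⟩)
  refine ⟨π '' I, hI.image π, Set.image_compl_eq π.bijective ▸ hJ.image π, ?_⟩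
  rw [← Set.image_compl_eq π.bijective]
  rintro _ ⟨i, hi, rfl⟩ _ ⟨j, hj, rfl⟩
  have hle : Subgroup.closure (s '' I) ≤ Subgroup.centralizer (Subgroup.closure (s '' Iᶜ)) := by
    rw [Subgroup.centralizer_closure, Subgroup.closure_le]
    rintro _ ⟨k, hk, rfl⟩ _ ⟨l, hl, rfl⟩
    exact (hcomm k hk l hl).symm
  have hcomm' : ∀ i ∈ Iᶜ, ∀ j ∈ Iᶜᶜ, Commute (s i) (s j) := fun i hi j hj =>
    (hcomm j (compl_compl I ▸ hj) i hi).symm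
  exact (hle (mem_closure hcomm hi) _ (mem_closure hcomm' hj)).symm

theorem IsReducible.of_commute {s : Fin n → G} {t : Fin n → H}
    (hst : ∀ i j, Commute (t i) (t j) → Commute (s i) (s j))
    (ht : IsReducible t) : IsReducible s := by
  obtain ⟨I, hI, hI', hcomm⟩ := ht
  exact ⟨I, hI, hI', fun i hi j hj => hst i j (hcomm i hi j hj)⟩

theorem isReducible_of_commute {s : Fin n → G} {i j : Fin n} (hij : i ≠ j)
    (h : ∀ k ≠ i, Commute (s i) (s k)) : IsReducible s :=
  ⟨{i}, ⟨i, rfl⟩, ⟨j, hij.symm⟩, by rintro _ rfl k hk; exact h k hk⟩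

/-- An irreducible system with finite Hurwitz orbit and entries in `Γ`. The three conditions are
bundled because together they pass to every system in the Hurwitz orbit. -/
structure IsFiniteIrreducible (Γ : Subgroup G) (s : Fin n → G) : Prop where
  mem (k : Fin n) : s k ∈ Γ
  finite : (hurwitzOrbit s).Finite
  irreducible : ¬IsReducible s

namespace IsFiniteIrreducible

variable {Γ : Subgroup G} {A B C : G}

theorem of_mem_hurwitzOrbit (hs : IsFiniteIrreducible Γ s) (h : t ∈ hurwitzOrbit s) :
    IsFiniteIrreducible Γ t where
  mem k := by
    have hle : Subgroup.closure (Set.range s) ≤ Γ := by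
      rw [Subgroup.closure_le]
      rintro _ ⟨k, rfl⟩
      exact hs.mem k
    exact hle ((isPermConj_of_mem_hurwitzOrbit h).mem_closure k)
  finite := hs.finite.subset (hurwitzOrbit_subset_of_mem h)
  irreducible ht := hs.irreducible
    (ht.of_isPermConj (isPermConj_of_mem_hurwitzOrbit (mem_hurwitzOrbit_symm h)))

theorem conj_left (h : IsFiniteIrreducible Γ ![A, B, C]) :
    IsFiniteIrreducible Γ ![A * B * A⁻¹, A, C] := by
  refine h.of_mem_hurwitzOrbit ⟨(.of (0 : Fin (3 - 1)))⁻¹, ?_⟩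
  rw [hurwitzAct_of_inv]
  funext k
  fin_cases k <;> simp [hEquiv]

theorem conj_by_right (h : IsFiniteIrreducible Γ ![A, B, C]) :
    IsFiniteIrreducible Γ ![C, C⁻¹ * A * C, C⁻¹ * B * C] := by
  refine h.of_mem_hurwitzOrbit ⟨.of (1 : Fin (3 - 1)) * .of (0 : Fin (3 - 1)), ?_⟩
  rw [hurwitzAct_mul, hurwitzAct_of, hurwitzAct_of]
  funext k
  fin_cases k <;> simp [hEquiv]

theorem not_commute_left (h : IsFiniteIrreducible Γ ![A, B, C]) (hAB : Commute A B) :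
    ¬Commute A C := fun hAC =>
  h.irreducible <| isReducible_of_commute (i := 0) (j := 1) (by decide) fun k hk => by
    fin_cases k <;> simp_all

theorem not_commute_middle (h : IsFiniteIrreducible Γ ![A, B, C]) (hAB : Commute A B) :
    ¬Commute B C := fun hBC =>
  h.irreducible <| isReducible_of_commute (i := 1) (j := 0) (by decide) fun k hk => by
    fin_cases k <;> simp_all [hAB.symm]

theorem not_commute_right (h : IsFiniteIrreducible Γ ![A, B, C]) (hAC : Commute A C) :
    ¬Commute B C := fun hBC =>
  h.irreducible <| isReducible_of_commute (i := 2) (j := 0) (by decide) fun k hk => by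
    fin_cases k <;> simp_all [hAC.symm, hBC.symm]

end IsFiniteIrreducible

end Hurwitz

section Center

variable {G : Type*} [Group G] {a b c d : G}

theorem notMem_center_of_not_commute (h : ¬Commute a b) : b ∉ Subgroup.center G :=
  fun hb => h (Subgroup.mem_center_iff.1 hb a)

theorem commute_of_commute_mul_of_mem_center (hc : c ∈ Subgroup.center G)
    (hd : d ∈ Subgroup.center G) (h : Commute (c * a) (d * b)) : Commute a b := by
  have hc' (g : G) : Commute c⁻¹ g := (Subgroup.mem_center_iff.1 (inv_mem hc) g).symm
  have hd' (g : G) : Commute g d⁻¹ := Subgroup.mem_center_iff.1 (inv_mem hd) g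
  simpa only [inv_mul_cancel_left] using (hc' _).mul_left ((hd' _).mul_right h)

end Center

section SpecialLinearTwo

open Matrix.SpecialLinearGroup
open scoped MatrixGroups commutatorElement

section CommRing

variable {R : Type*} [CommRing R] (A B C : SL(2, R))

theorem coe_add_coe_inv : A.1 + (A⁻¹).1 = A.1.trace • (1 : Matrix (Fin 2) (Fin 2) R) := by
  rw [coe_inv, Matrix.adjugate_fin_two, Matrix.trace_fin_two]
  ext i j
  fin_cases i <;> fin_cases j <;> simp [add_comm]

theorem coe_mul_self : A.1 * A.1 = A.1.trace • A.1 - 1 := by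
  have h := congrArg (A.1 * ·) (coe_add_coe_inv A)
  simp only [mul_add, mul_smul_comm, mul_one] at h
  rw [← h, ← coe_mul, ← coe_mul, mul_inv_cancel, coe_one, add_sub_cancel_right]

theorem trace_mul_comm : (A * B).1.trace = (B * A).1.trace := by
  rw [coe_mul, coe_mul, Matrix.trace_mul_comm]

theorem trace_conj : (A * B * A⁻¹).1.trace = B.1.trace := by
  rw [trace_mul_comm, inv_mul_cancel_left]

theorem trace_inv_conj : (A⁻¹ * B * A).1.trace = B.1.trace := by
  simpa only [inv_inv] using trace_conj A⁻¹ B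

theorem trace_mul_inv : (A * B⁻¹).1.trace = A.1.trace * B.1.trace - (A * B).1.trace := by
  have h : A.1 * B.1 + A.1 * (B⁻¹).1 = B.1.trace • A.1 := by
    rw [← mul_add, coe_add_coe_inv, mul_smul_comm, mul_one]
  rw [eq_sub_iff_add_eq', coe_mul, coe_mul, ← Matrix.trace_add, h, Matrix.trace_smul,
    smul_eq_mul, mul_comm]

theorem trace_inv : (A⁻¹).1.trace = A.1.trace := by
  have h := trace_mul_inv 1 A
  rw [one_mul, one_mul, coe_one, Matrix.trace_one, Fintype.card_fin, Nat.cast_ofNat] at h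
  linear_combination h

theorem trace_mul_self : (A * A).1.trace = A.1.trace ^ 2 - 2 := by
  have h := trace_mul_inv A A
  rw [mul_inv_cancel, coe_one, Matrix.trace_one, Fintype.card_fin, Nat.cast_ofNat] at h
  linear_combination h

theorem trace_mul_mul_self :
    (A * (B * B)).1.trace = B.1.trace * (A * B).1.trace - A.1.trace := by
  have h := trace_mul_inv (A * B) B
  rw [mul_inv_cancel_right] at h
  rw [← mul_assoc]
  linear_combination h

theorem trace_conj_mul :
    (A * B * A⁻¹ * C).1.trace =
      A.1.trace * (A * B * C).1.trace + B.1.trace * C.1.trace - (B * C).1.trace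
        - (A * B).1.trace * (A * C).1.trace := by
  have rotate : (A * B * A⁻¹ * C).1.trace = A.1.trace * (A * B * C).1.trace
      - (C * A * (B * A)).1.trace := by
    rw [trace_mul_comm, ← mul_assoc, trace_mul_inv, trace_mul_comm C, ← mul_assoc, ← mul_assoc,
      mul_comm]
  have cancel : C * A * (B * A)⁻¹ = C * B⁻¹ := by group
  have expand : (C * A).1.trace * (B * A).1.trace - (C * A * (B * A)).1.trace
      = C.1.trace * B.1.trace - (C * B).1.trace := by
    rw [← trace_mul_inv, cancel, trace_mul_inv]
  rw [trace_mul_comm C A, trace_mul_comm B A, trace_mul_comm C B] at expand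
  linear_combination rotate + expand

theorem trace_commutator :
    ⁅A, B⁆.1.trace = A.1.trace ^ 2 + B.1.trace ^ 2 + (A * B).1.trace ^ 2
      - A.1.trace * B.1.trace * (A * B).1.trace - 2 := by
  rw [commutatorElement_def, trace_mul_inv, trace_conj, trace_conj_mul, mul_assoc A B B,
    trace_mul_mul_self, trace_mul_self]
  ring

theorem det_coe_sub_one : (A.1 - 1).det = 2 - A.1.trace := by
  have hdet := A.2
  rw [Matrix.det_fin_two] at hdet ⊢
  simp only [Matrix.sub_apply, Matrix.one_apply, Matrix.trace_fin_two]
  norm_num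
  linear_combination hdet

theorem det_mul_sub_mul : (A.1 * B.1 - B.1 * A.1).det = 2 - ⁅A, B⁆.1.trace := by
  have hfactor : A.1 * B.1 - B.1 * A.1 = (⁅A, B⁆.1 - 1) * (B * A).1 := by
    rw [sub_mul, one_mul, ← coe_mul, ← coe_mul, ← coe_mul, commutatorElement_def]
    group
  rw [hfactor, Matrix.det_mul, det_coe, mul_one, det_coe_sub_one]

variable {A B} {M N : SL(2, R)}

theorem trace_sq_add_of_commute (h : Commute A B) :
    A.1.trace ^ 2 + B.1.trace ^ 2 + (A * B).1.trace ^ 2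
      - A.1.trace * B.1.trace * (A * B).1.trace = 4 := by
  have hcomm := trace_commutator A B
  rw [commutatorElement_eq_one_iff_commute.2 h, coe_one, Matrix.trace_one,
    Fintype.card_fin] at hcomm
  push_cast at hcomm
  linear_combination -hcomm

theorem commute_iff_coe : Commute A B ↔ Commute A.1 B.1 := by
  rw [commute_iff_eq, commute_iff_eq, ← coe_mul, ← coe_mul]
  exact Subtype.ext_iff

theorem mem_center_of_apply_eq (h01 : M.1 0 1 = 0) (h10 : M.1 1 0 = 0) (h : M.1 0 0 = M.1 1 1) :
    M ∈ Subgroup.center SL(2, R) := by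
  have hscalar : M.1 = Matrix.scalar (Fin 2) (M.1 0 0) := by
    ext i j
    fin_cases i <;> fin_cases j <;> simp [h01, h10, h]
  rw [Subgroup.mem_center_iff]
  intro A
  rw [← commute_iff_eq, commute_iff_coe, hscalar]
  exact (Matrix.scalar_commute _ (mul_comm _) _).symm

theorem apply_eq_zero_of_mem_center (hM : M ∈ Subgroup.center SL(2, R)) :
    M.1 0 1 = 0 ∧ M.1 1 0 = 0 := by
  obtain ⟨r, -, hr⟩ := mem_center_iff.1 hM
  rw [← hr, Matrix.scalar_apply]
  exact ⟨Matrix.diagonal_apply_ne _ zero_ne_one, Matrix.diagonal_apply_ne _ one_ne_zero⟩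

theorem exists_smul_eq_add_of_commute (hM : M ∉ Subgroup.center SL(2, R)) (h : Commute M N) :
    ∃ a b c : R, a ≠ 0 ∧ a • N.1 = b • M.1 + c • (1 : Matrix (Fin 2) (Fin 2) R) := by
  have hentries := Matrix.ext_iff.2 (commute_iff_coe.1 h).eq
  simp only [Matrix.mul_apply, Fin.sum_univ_two, Fin.forall_fin_two] at hentries
  obtain ⟨⟨h00, h01⟩, h10, -⟩ := hentries
  by_cases ha : M.1 0 1 = 0
  · by_cases hb : M.1 1 0 = 0
    · have hc : M.1 0 0 - M.1 1 1 ≠ 0 := fun hc =>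
        hM (mem_center_of_apply_eq ha hb (sub_eq_zero.1 hc))
      refine ⟨_, N.1 0 0 - N.1 1 1, M.1 0 0 * N.1 1 1 - M.1 1 1 * N.1 0 0, hc, ?_⟩
      ext i j
      fin_cases i <;> fin_cases j <;> simp <;> grind
    · refine ⟨_, N.1 1 0, M.1 1 0 * N.1 1 1 - N.1 1 0 * M.1 1 1, hb, ?_⟩
      ext i j
      fin_cases i <;> fin_cases j <;> simp <;> grind
  · refine ⟨_, N.1 0 1, M.1 0 1 * N.1 1 1 - N.1 0 1 * M.1 1 1, ha, ?_⟩
    ext i j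
    fin_cases i <;> fin_cases j <;> simp <;> grind

end CommRing

section Commute

variable {R : Type*} [CommRing R] [IsDomain R] {A B M N : SL(2, R)}

theorem commute_of_smul_eq_add {a b c : R} (ha : a ≠ 0)
    (h : a • N.1 = b • M.1 + c • (1 : Matrix (Fin 2) (Fin 2) R)) (hA : Commute M A) :
    Commute N A := by
  have hsmul : Commute (a • N.1) A.1 := by
    rw [h]
    exact ((commute_iff_coe.1 hA).smul_left b).add_left ((Commute.one_left A.1).smul_left c)
  rw [commute_iff_coe]
  rw [commute_iff_eq, smul_mul_assoc, mul_smul_comm] at hsmul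
  exact smul_right_injective _ ha hsmul

theorem commute_trans_of_notMem_center (hM : M ∉ Subgroup.center SL(2, R)) (hA : Commute A M)
    (hB : Commute M B) : Commute A B := by
  obtain ⟨a, b, c, ha, h⟩ := exists_smul_eq_add_of_commute hM hA.symm
  exact commute_of_smul_eq_add ha h hB

end Commute

section Ordered

variable {R : Type*} [CommRing R] [LinearOrder R] [IsStrictOrderedRing R] {A B M : SL(2, R)}

/- The trace form is definite on the trace-zero matrices orthogonal to an elliptic `B`. -/
theorem eq_zero_of_discr_neg {B D : Matrix (Fin 2) (Fin 2) R} (hB : B.discr < 0)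
    (htrace : D.trace = 0) (horth : (B * D).trace = 0) (hdet : D.det = 0) : D = 0 := by
  simp only [Matrix.discr_fin_two, Matrix.trace_fin_two, Matrix.det_fin_two, Matrix.mul_apply,
    Fin.sum_univ_two] at *
  have hb : B 0 1 ≠ 0 := fun hb => by
    rw [hb] at hB
    nlinarith [sq_nonneg (B 0 0 - B 1 1)]
  have h11 : D 1 1 = -D 0 0 := by linear_combination htrace
  have hform : (2 * B 0 1 * D 0 0 - (B 0 0 - B 1 1) * D 0 1) ^ 2
      = ((B 0 0 + B 1 1) ^ 2 - 4 * (B 0 0 * B 1 1 - B 0 1 * B 1 0)) * D 0 1 ^ 2 := by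
    rw [h11] at horth hdet
    linear_combination -4 * B 0 1 * D 0 1 * horth - 4 * B 0 1 ^ 2 * hdet
  have h01 : D 0 1 = 0 := by
    by_contra h
    have := mul_neg_of_neg_of_pos hB (sq_pos_of_ne_zero h)
    nlinarith [sq_nonneg (2 * B 0 1 * D 0 0 - (B 0 0 - B 1 1) * D 0 1)]
  have h00 : D 0 0 = 0 := by simpa [h01, hb] using hform
  have h10 : D 1 0 = 0 := by simpa [h01, h00, h11, hb] using horth
  ext i j
  fin_cases i <;> fin_cases j <;> simp [h00, h01, h10, h11]

theorem commute_of_trace_commutator_eq_two (hB : B.1.trace ^ 2 < 4) (h : ⁅A, B⁆.1.trace = 2) :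
    Commute A B := by
  rw [commute_iff_coe, commute_iff_eq, ← sub_eq_zero]
  refine eq_zero_of_discr_neg (B := B.1) ?_ ?_ ?_ ?_
  · rw [Matrix.discr_fin_two, det_coe]
    linarith
  · rw [Matrix.trace_sub, Matrix.trace_mul_comm, sub_self]
  · rw [mul_sub, Matrix.trace_sub, ← mul_assoc, Matrix.trace_mul_comm, sub_self]
  · rw [det_mul_sub_mul, h, sub_self]

theorem commute_of_trace_mul_eq_neg_one (hAB : (A * B).1.trace = -1)
    (h : A.1.trace ^ 2 + A.1.trace * B.1.trace + B.1.trace ^ 2 = 3) : Commute A B := by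
  rcases lt_or_ge (B.1.trace ^ 2) 4 with hB | hB
  · refine commute_of_trace_commutator_eq_two hB ?_
    rw [trace_commutator, hAB]
    linear_combination h
  · refine (commute_of_trace_commutator_eq_two ?_ ?_).symm
    · nlinarith [sq_nonneg (A.1.trace + B.1.trace)]
    · rw [trace_commutator, trace_mul_comm, hAB]
      linear_combination h

theorem exists_pow_succ_eq_smul_add (hM : 4 ≤ M.1.trace ^ 2) (n : ℕ) :
    ∃ u v : R, |v| < |u| ∧
      (M ^ (n + 1)).1 = u • M.1 + v • (1 : Matrix (Fin 2) (Fin 2) R) := by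
  have htrace : 2 ≤ |M.1.trace| := by
    rw [← abs_of_pos (two_pos : (0 : R) < 2), ← sq_le_sq]; linarith
  induction n with
  | zero => exact ⟨1, 0, by simp, by simp⟩
  | succ n ih =>
    obtain ⟨u, v, hlt, heq⟩ := ih
    refine ⟨u * M.1.trace + v, -u, ?_, ?_⟩
    · calc |-u| < 2 * |u| - |v| := by rw [abs_neg]; linarith
        _ ≤ |u * M.1.trace| - |v| := by rw [abs_mul]; nlinarith [abs_nonneg u]
        _ ≤ |u * M.1.trace + v| := by
          simpa using abs_sub_abs_le_abs_sub (u * M.1.trace) (-v)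
    · rw [pow_succ, coe_mul, heq, add_mul, smul_mul_assoc, coe_mul_self, smul_mul_assoc, one_mul]
      module

theorem commute_of_commute_pow (hM : 4 ≤ M.1.trace ^ 2) {k : ℕ} (hk : 0 < k)
    (h : Commute (M ^ k) A) : Commute M A := by
  obtain ⟨n, rfl⟩ := Nat.exists_eq_succ_of_ne_zero hk.ne'
  obtain ⟨u, v, hlt, heq⟩ := exists_pow_succ_eq_smul_add hM n
  refine commute_of_smul_eq_add (a := u) (b := 1) (c := -v) ?_ (by rw [heq]; module) h
  rintro rfl
  simp [(abs_nonneg v).not_gt] at hlt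

end Ordered

section NegOneNotMem

variable {Γ : Subgroup SL(2, ℤ)} {A B C M : SL(2, ℤ)}

theorem trace_ne_zero_of_mem (hΓ : -1 ∉ Γ) (hM : M ∈ Γ) : M.1.trace ≠ 0 := fun h => by
  have hsq : M * M = -1 := by
    apply Subtype.ext
    rw [coe_mul, coe_mul_self, h, coe_neg, coe_one]
    simp
  exact hΓ (hsq ▸ mul_mem hM hM)

theorem trace_ne_one_of_mem (hΓ : -1 ∉ Γ) (hM : M ∈ Γ) : M.1.trace ≠ 1 := fun h => by
  have hcube : M * M * M = -1 := by
    apply Subtype.ext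
    rw [coe_mul, coe_mul, coe_mul_self, h, one_smul, sub_mul, coe_mul_self, h, coe_neg, coe_one]
    simp
  exact hΓ (hcube ▸ mul_mem (mul_mem hM hM) hM)

theorem eq_one_of_mem_center (hΓ : -1 ∉ Γ) (hM : M ∈ Γ) (h : M ∈ Subgroup.center SL(2, ℤ)) :
    M = 1 := by
  obtain ⟨r, hr, hrM⟩ := mem_center_iff.1 h
  rw [Fintype.card_fin, sq_eq_one_iff] at hr
  rcases hr with rfl | rfl
  · exact Subtype.ext (by rw [← hrM, map_one, coe_one])
  · refine absurd hM ((?_ : M = -1) ▸ hΓ)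
    exact Subtype.ext (by rw [← hrM, map_neg, map_one, coe_neg, coe_one])

theorem commute_or_trace_eq_neg_one (hΓ : -1 ∉ Γ) (hM : M ∈ Γ) {k : ℕ} (hk : 0 < k)
    (h : Commute (M ^ k) A) : Commute M A ∨ M.1.trace = -1 := by
  rcases le_or_gt 4 (M.1.trace ^ 2) with hge | hlt
  · exact .inl (commute_of_commute_pow hge hk h)
  · have hlower : -2 < M.1.trace := by nlinarith
    have hupper : M.1.trace < 2 := by nlinarith
    have := trace_ne_zero_of_mem hΓ hM
    have := trace_ne_one_of_mem hΓ hM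
    exact .inr (by omega)

theorem commute_of_commute_conj (hΓ : -1 ∉ Γ) (hA : A ∈ Γ) (hAB : (A * B).1.trace = -1)
    (h : Commute (A * B * A⁻¹) B) : Commute A B := by
  refine commute_of_trace_mul_eq_neg_one hAB ?_
  have hx := trace_ne_one_of_mem hΓ hA
  have hcomm := trace_sq_add_of_commute h
  rw [trace_conj, trace_conj_mul, mul_assoc A B B, trace_mul_mul_self, trace_mul_self, hAB] at hcomm
  set x := A.1.trace
  set y := B.1.trace
  have hprod : (x * (x + y) + 1) * (x ^ 2 + x * y + y ^ 2 - 3) = 0 := by linear_combination hcomm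
  rcases mul_eq_zero.1 hprod with hzero | hzero
  · have hunit : x * -(x + y) = 1 := by linear_combination -hzero
    obtain ⟨hx', -⟩ | ⟨hx', hy'⟩ := Int.mul_eq_one_iff_eq_one_or_neg_one.1 hunit
    · exact absurd hx' hx
    · rw [show y = 2 by omega, hx']
      norm_num
  · linear_combination hzero

/- For `x, y, z` the traces of `A`, `B`, `C` and `q` that of `B * C`, these are the trace relations
forced when `B` and `C` are the commuting pair; the conclusion amounts to `⁅A, B⁆` having trace `2`
once `A * B` has trace `-1`. -/
theorem sq_add_mul_add_sq_eq_three {x y z q : ℤ} (hy : y ≠ 0) (hz : z ≠ 0)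
    (hxz : q = y - x * z - 2) (hxy : q = z - x * y - 2) (hyz : q = y * z - x)
    (hcomm : y ^ 2 + z ^ 2 + q ^ 2 - y * z * q = 4) : x ^ 2 + x * y + y ^ 2 = 3 := by
  have hfactor : (x + 1) * (y - z) = 0 := by linear_combination hxy - hxz
  rcases mul_eq_zero.1 hfactor with hx | hyz'
  · obtain rfl : x = -1 := by omega
    have hprod : (y - 1) * (1 - z) = 2 := by linear_combination hyz - hxz
    have hupper := Int.le_of_dvd two_pos (Dvd.intro _ hprod)
    have hlower := Int.le_of_dvd two_pos (neg_dvd.2 (Dvd.intro _ hprod))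
    have hy' : y = -1 ∨ y = 2 := by
      replace hlower : -1 ≤ y := by omega
      replace hupper : y ≤ 3 := by omega
      interval_cases y <;> omega
    rcases hy' with rfl | rfl <;> norm_num
  · obtain rfl : y = z := by omega
    have hprod : (q - 2) * (q + 2 - y ^ 2) = 0 := by linear_combination hcomm
    rcases mul_eq_zero.1 hprod with hq | hq
    · have hcubic : y * (y ^ 2 - 3) = -4 := by
        linear_combination hxy - y * hyz + (y - 1) * hq
      have hlower : -3 < y := by nlinarith
      have hupper : y < 2 := by nlinarith
      interval_cases y <;> omega
    · obtain rfl : x = 2 := by linear_combination hyz - hq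
      have hy' : y * (y + 1) = 0 := by linear_combination hxy - hyz
      obtain rfl : y = -1 := by
        have := (mul_eq_zero.1 hy').resolve_left hy
        omega
      norm_num

theorem sq_add_mul_add_sq_eq_three_of_cyclic {x y z : ℤ} (hxy : x * y = z - 1)
    (hxz : x * z = y - 1) (hyz : y * z = x - 1) : x ^ 2 + x * y + y ^ 2 = 3 := by
  have hx : (x + 1) * (y - z) = 0 := by linear_combination hxy - hxz
  have hy : (y + 1) * (x - z) = 0 := by linear_combination hxy - hyz
  rcases mul_eq_zero.1 hx with hx | hx
  · obtain rfl : x = -1 := by omega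
    obtain rfl : z = 1 - y := by linear_combination -hxy
    linear_combination -hyz
  rcases mul_eq_zero.1 hy with hy | hy
  · obtain rfl : y = -1 := by omega
    obtain rfl : z = -1 := by omega
    obtain rfl : x = 2 := by omega
    norm_num
  · obtain rfl : y = z := by omega
    obtain rfl : x = y := by omega
    nlinarith [sq_nonneg (2 * x - 1)]

namespace IsFiniteIrreducible

theorem commute_or_trace_mul_of_adjacent {s : Fin 3 → SL(2, ℤ)} (hΓ : -1 ∉ Γ)
    (h : IsFiniteIrreducible Γ s) {i j : Fin 3} (hij : i.val + 1 = j.val) :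
    Commute (s i) (s j) ∨ (s i * s j).1.trace = -1 := by
  obtain ⟨k, hk, hcomm⟩ := exists_pow_commute_of_adjacent h.finite hij
  refine (commute_or_trace_eq_neg_one hΓ (mul_mem (h.mem i) (h.mem j)) hk hcomm).imp_left ?_
  intro hcomm
  simpa using (Commute.refl (s i)).inv_right.mul_right hcomm.symm

theorem commute_or_trace_left_middle (hΓ : -1 ∉ Γ) (h : IsFiniteIrreducible Γ ![A, B, C]) :
    Commute A B ∨ (A * B).1.trace = -1 :=
  h.commute_or_trace_mul_of_adjacent hΓ (i := 0) (j := 1) rfl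

theorem commute_or_trace_middle_right (hΓ : -1 ∉ Γ) (h : IsFiniteIrreducible Γ ![A, B, C]) :
    Commute B C ∨ (B * C).1.trace = -1 :=
  h.commute_or_trace_mul_of_adjacent hΓ (i := 1) (j := 2) rfl

theorem commute_or_trace_left_right (hΓ : -1 ∉ Γ) (h : IsFiniteIrreducible Γ ![A, B, C]) :
    Commute A C ∨ (A * C).1.trace = -1 :=
  h.conj_left.commute_or_trace_middle_right hΓ

theorem mul_mul_ne_one (hΓ : -1 ∉ Γ) (h : IsFiniteIrreducible Γ ![A, B, C]) :
    A * B * C ≠ 1 := fun hprod => by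
  have hA : A = (B * C)⁻¹ := eq_inv_of_mul_eq_one_left (by rwa [← mul_assoc])
  have hC : C = (A * B)⁻¹ := eq_inv_of_mul_eq_one_right hprod
  have hB : B = A⁻¹ * C⁻¹ := by rw [hC]; group
  have hBC : ¬Commute B C := fun hBC => h.not_commute_middle (B := B)
    (by rw [hA]; exact ((Commute.refl B).mul_left hBC.symm).inv_left) hBC
  have hAB : ¬Commute A B := fun hAB => h.not_commute_middle hAB
    (by rw [hC]; exact (hAB.symm.mul_right (Commute.refl B)).inv_right)
  have hAC : Commute A C := by
    refine (h.commute_or_trace_left_right hΓ).elim id fun htrace => ?_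
    refine commute_of_trace_mul_eq_neg_one htrace ?_
    have hx : A.1.trace = -1 := by
      rw [hA, trace_inv]; exact (h.commute_or_trace_middle_right hΓ).resolve_left hBC
    have hz : C.1.trace = -1 := by
      rw [hC, trace_inv]; exact (h.commute_or_trace_left_middle hΓ).resolve_left hAB
    rw [hx, hz]; norm_num
  refine hAB ?_
  rw [hB]
  exact (Commute.refl A).inv_right.mul_right hAC.inv_right

theorem trace_mul_mul (hΓ : -1 ∉ Γ) (h : IsFiniteIrreducible Γ ![A, B, C]) :
    (A * B * C).1.trace = -1 := by
  by_contra htrace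
  have hmem : A * B * C ∈ Γ := mul_mem (mul_mem (h.mem 0) (h.mem 1)) (h.mem 2)
  have hcomm (i : Fin 3) : Commute (A * B * C) (![A, B, C] i) := by
    obtain ⟨k, hk, hpow⟩ := exists_pow_commute_of_fin_three h.finite i
    exact (commute_or_trace_eq_neg_one hΓ hmem hk hpow).resolve_right htrace
  have hcenter : A * B * C ∉ Subgroup.center SL(2, ℤ) := fun hcenter =>
    h.mul_mul_ne_one hΓ (eq_one_of_mem_center hΓ hmem hcenter)
  exact h.not_commute_left (commute_trans_of_notMem_center hcenter (hcomm 0).symm (hcomm 1))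
    (commute_trans_of_notMem_center hcenter (hcomm 0).symm (hcomm 2))

theorem not_commute_middle_right (hΓ : -1 ∉ Γ) (h : IsFiniteIrreducible Γ ![A, B, C]) :
    ¬Commute B C := fun hBC => by
  have hAB : ¬Commute A B := fun hAB => h.not_commute_middle hAB hBC
  have hAC : ¬Commute A C := fun hAC => h.not_commute_right hAC hBC
  have hp := (h.commute_or_trace_left_middle hΓ).resolve_left hAB
  have hr := (h.commute_or_trace_left_right hΓ).resolve_left hAC
  have ht := h.trace_mul_mul hΓ
  have ht' : (B * C * A).1.trace = -1 := by rw [← ht, trace_mul_comm, mul_assoc]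
  have hxz := trace_conj_mul B C A
  rw [hBC.eq, mul_inv_cancel_right, ← hBC.eq, ht', trace_mul_comm C A, trace_mul_comm B A, hp, hr]
    at hxz
  have hxy := trace_conj_mul C B A
  rw [← hBC.eq, mul_inv_cancel_right, ht', trace_mul_comm C A, trace_mul_comm B A, hp, hr] at hxy
  have hconj : ¬Commute (A * B * A⁻¹) C := fun hconj =>
    hAB (commute_of_commute_conj hΓ (h.mem 0) hp
      (commute_trans_of_notMem_center (notMem_center_of_not_commute hAC) hconj hBC.symm))
  have htrace := (h.conj_left.commute_or_trace_left_right hΓ).resolve_left hconj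
  have hyz := trace_conj_mul A B C
  rw [htrace, ht, hp, hr] at hyz
  refine hAB (commute_of_trace_mul_eq_neg_one hp (sq_add_mul_add_sq_eq_three
    (trace_ne_zero_of_mem hΓ (h.mem 1)) (z := C.1.trace) (trace_ne_zero_of_mem hΓ (h.mem 2))
    ?_ ?_ ?_ (trace_sq_add_of_commute hBC)))
  · linear_combination -hxz
  · linear_combination -hxy
  · linear_combination hyz

theorem not_commute_left_right (hΓ : -1 ∉ Γ) (h : IsFiniteIrreducible Γ ![A, B, C]) :
    ¬Commute A C :=
  h.conj_left.not_commute_middle_right hΓ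

theorem not_commute_left_middle (hΓ : -1 ∉ Γ) (h : IsFiniteIrreducible Γ ![A, B, C]) :
    ¬Commute A B := fun hAB => by
  refine h.conj_by_right.not_commute_middle_right hΓ ?_
  simpa using (Commute.conj_iff (h := C⁻¹)).2 hAB

theorem trace_left_middle (hΓ : -1 ∉ Γ) (h : IsFiniteIrreducible Γ ![A, B, C]) :
    (A * B).1.trace = -1 :=
  (h.commute_or_trace_left_middle hΓ).resolve_left (h.not_commute_left_middle hΓ)

theorem trace_middle_right (hΓ : -1 ∉ Γ) (h : IsFiniteIrreducible Γ ![A, B, C]) :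
    (B * C).1.trace = -1 :=
  (h.commute_or_trace_middle_right hΓ).resolve_left (h.not_commute_middle_right hΓ)

theorem trace_left_right (hΓ : -1 ∉ Γ) (h : IsFiniteIrreducible Γ ![A, B, C]) :
    (A * C).1.trace = -1 :=
  (h.commute_or_trace_left_right hΓ).resolve_left (h.not_commute_left_right hΓ)

theorem trace_middle_mul_trace_right (hΓ : -1 ∉ Γ) (h : IsFiniteIrreducible Γ ![A, B, C]) :
    B.1.trace * C.1.trace = A.1.trace - 1 := by
  have hconj := trace_conj_mul A B C
  rw [h.conj_left.trace_left_right hΓ, h.trace_mul_mul hΓ, h.trace_left_middle hΓ,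
    h.trace_middle_right hΓ, h.trace_left_right hΓ] at hconj
  linear_combination -hconj

end IsFiniteIrreducible

theorem isReducible_of_finite_hurwitzOrbit {s : Fin 3 → SL(2, ℤ)} (hΓ : -1 ∉ Γ)
    (hs : ∀ k, s k ∈ Γ) (hfin : (hurwitzOrbit s).Finite) : IsReducible s := by
  by_contra hirr
  obtain ⟨A, B, C, rfl⟩ : ∃ A B C, s = ![A, B, C] :=
    ⟨s 0, s 1, s 2, by funext k; fin_cases k <;> rfl⟩
  have h : IsFiniteIrreducible Γ ![A, B, C] := ⟨hs, hfin, hirr⟩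
  have hyz := h.trace_middle_mul_trace_right hΓ
  have hxz := h.conj_left.trace_middle_mul_trace_right hΓ
  have hxy := h.conj_by_right.trace_middle_mul_trace_right hΓ
  rw [trace_conj] at hxz
  rw [trace_inv_conj, trace_inv_conj] at hxy
  exact h.not_commute_left_middle hΓ (commute_of_trace_mul_eq_neg_one (h.trace_left_middle hΓ)
    (sq_add_mul_add_sq_eq_three_of_cyclic hxy hxz hyz))

end NegOneNotMem

end SpecialLinearTwo

section ModularRepresentation

open ModularGroup Matrix.SpecialLinearGroup
open scoped MatrixGroups

variable {G : Type*} [Group G] {x y g w : G}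

theorem exists_mul_eq_zpow_mul {i : ℕ} (hi : i < 3) (j : ℤ)
    (hw : w ∈ Submonoid.closure {x⁻¹ * y, x⁻¹ * y ^ 2}) :
    ∃ m : ℤ, ∃ k < 3, ∃ v ∈ Submonoid.closure {x⁻¹ * y, x⁻¹ * y ^ 2}, ∃ l : ℤ,
      x * (y ^ i * w * x ^ j) = (x ^ 2) ^ m * (y ^ k * v * x ^ l) := by
  have ha : x⁻¹ * y ∈ Submonoid.closure {x⁻¹ * y, x⁻¹ * y ^ 2} :=
    Submonoid.subset_closure (Set.mem_insert _ _)
  have hb : x⁻¹ * y ^ 2 ∈ Submonoid.closure {x⁻¹ * y, x⁻¹ * y ^ 2} :=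
    Submonoid.subset_closure (Set.mem_insert_of_mem _ rfl)
  interval_cases i
  · induction hw using Submonoid.closure_induction_left with
    | one => exact ⟨0, 0, by simp, 1, one_mem _, 1 + j, by simp [zpow_add]⟩
    | mul_left u hu w hw _ =>
      rcases hu with rfl | rfl
      · exact ⟨0, 1, by simp, w, hw, j, by group⟩
      · exact ⟨0, 2, by simp, w, hw, j, by group⟩
  · exact ⟨1, 0, by simp, _, mul_mem ha hw, j, by group⟩
  · exact ⟨1, 0, by simp, _, mul_mem hb hw, j, by group⟩

theorem exists_eq_zpow_mul (hxy : x ^ 2 = y ^ 3) (hg : g ∈ Subgroup.closure {x, y}) :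
    ∃ m : ℤ, ∃ i < 3, ∃ w ∈ Submonoid.closure {x⁻¹ * y, x⁻¹ * y ^ 2}, ∃ j : ℤ,
      g = (x ^ 2) ^ m * (y ^ i * w * x ^ j) := by
  set P : G → Prop := fun g => ∃ m : ℤ, ∃ i < 3,
    ∃ w ∈ Submonoid.closure {x⁻¹ * y, x⁻¹ * y ^ 2}, ∃ j : ℤ,
      g = (x ^ 2) ^ m * (y ^ i * w * x ^ j)
  have zpow_mul (n : ℤ) {g : G} : P g → P ((x ^ 2) ^ n * g) := by
    rintro ⟨m, i, hi, w, hw, j, rfl⟩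
    exact ⟨n + m, i, hi, w, hw, j, by rw [zpow_add, mul_assoc ((x ^ 2) ^ n)]⟩
  have left_mul {g : G} : P g → P (x * g) := by
    rintro ⟨m, i, hi, w, hw, j, rfl⟩
    rw [← mul_assoc, (((Commute.refl x).pow_right 2).zpow_right m).eq, mul_assoc]
    exact zpow_mul m (exists_mul_eq_zpow_mul hi j hw)
  have right_mul {g : G} : P g → P (y * g) := by
    rintro ⟨m, i, hi, w, hw, j, rfl⟩
    have hcomm : Commute y ((x ^ 2) ^ m) := by
      rw [hxy]
      exact ((Commute.refl y).pow_right 3).zpow_right m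
    rw [← mul_assoc, hcomm.eq, mul_assoc]
    refine zpow_mul m ?_
    rcases (show i < 2 ∨ i = 2 by omega) with hi' | rfl
    · exact ⟨0, i + 1, by omega, w, hw, j, by simp [pow_succ', mul_assoc]⟩
    · exact ⟨1, 0, by simp, w, hw, j, by rw [hxy]; group⟩
  induction hg using Subgroup.closure_induction_left with
  | one => exact ⟨0, 0, by simp, 1, one_mem _, 0, by simp⟩
  | mul_left u hu g _ ih =>
    rcases hu with rfl | rfl
    exacts [left_mul ih, right_mul ih]
  | inv_mul_cancel u hu g _ ih =>
    rcases hu with rfl | rfl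
    · convert left_mul (zpow_mul (-1) ih) using 1
      group
    · convert right_mul (right_mul (zpow_mul (-1) ih)) using 1
      rw [hxy]
      group

theorem eq_one_or_entries_of_mem_closure {ρ : G →* SL(2, ℤ)} (hx : ρ x = S) (hy : ρ y = S * T)
    (hw : w ∈ Submonoid.closure {x⁻¹ * y, x⁻¹ * y ^ 2}) :
    (w = 1 ∨ 0 < (ρ w).1 0 1 + (ρ w).1 1 0) ∧
      0 < (ρ w).1 0 0 ∧ 0 ≤ (ρ w).1 0 1 ∧ 0 ≤ (ρ w).1 1 0 ∧ 0 < (ρ w).1 1 1 := by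
  have ha : (ρ (x⁻¹ * y)).1 = !![1, 1; 0, 1] := by
    rw [map_mul, map_inv, hx, hy, inv_mul_cancel_left, coe_T]
  have hb : (ρ (x⁻¹ * y ^ 2)).1 = !![1, 0; 1, 1] := by
    rw [map_mul, map_inv, map_pow, hx, hy, pow_two, mul_assoc, inv_mul_cancel_left, coe_mul,
      coe_mul, coe_S, coe_T]
    simp
  induction hw using Submonoid.closure_induction_left with
  | one => simp
  | mul_left u hu w _ ih =>
    obtain ⟨-, h00, h01, h10, h11⟩ := ih
    rcases hu with rfl | rfl
    · rw [map_mul, coe_mul, ha]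
      simp [Matrix.mul_apply]
      omega
    · rw [map_mul, coe_mul, hb]
      simp [Matrix.mul_apply]
      omega

theorem eq_one_of_map_mem_center {ρ : G →* SL(2, ℤ)} (hx : ρ x = S) (hy : ρ y = S * T)
    (hw : w ∈ Submonoid.closure {x⁻¹ * y, x⁻¹ * y ^ 2}) {i e : ℕ} (hi : i < 3) (he : e < 2)
    (hρ : ρ (y ^ i * w * x ^ e) ∈ Subgroup.center SL(2, ℤ)) : i = 0 ∧ w = 1 ∧ e = 0 := by
  obtain ⟨hone, h00, h01, h10, h11⟩ := eq_one_or_entries_of_mem_closure hx hy hw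
  obtain ⟨hzero, hzero'⟩ := apply_eq_zero_of_mem_center hρ
  rw [map_mul, map_mul, map_pow, map_pow, hx, hy] at hzero hzero'
  interval_cases i <;> interval_cases e <;>
    simp [pow_two, Matrix.mul_apply, Matrix.vecMul_eq_sum] at hzero hzero'
  · exact ⟨rfl, hone.resolve_right (by omega), rfl⟩
  all_goals omega

theorem neg_one_zpow_mem_center (k : ℤ) : (-1) ^ k ∈ Subgroup.center SL(2, ℤ) :=
  zpow_mem (Subgroup.mem_center_iff.2 fun M => by simp) k

theorem S_mul_S : S * S = -1 :=
  Subtype.ext S_mul_S_eq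

theorem mem_zpowers_of_map_mem_center {ρ : G →* SL(2, ℤ)} (hx : ρ x = S) (hy : ρ y = S * T)
    (hxy : x ^ 2 = y ^ 3) (hg : g ∈ Subgroup.closure {x, y})
    (hρ : ρ g ∈ Subgroup.center SL(2, ℤ)) : g ∈ Subgroup.zpowers (x ^ 2) := by
  obtain ⟨m, i, hi, w, hw, j, rfl⟩ := exists_eq_zpow_mul hxy hg
  have hcenter (k : ℤ) : ρ ((x ^ 2) ^ k) ∈ Subgroup.center SL(2, ℤ) := by
    rw [map_zpow, map_pow, hx, pow_two, S_mul_S]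
    exact neg_one_zpow_mem_center k
  obtain ⟨l, e, he, rfl⟩ : ∃ l : ℤ, ∃ e < 2, j = (e : ℕ) + 2 * l :=
    ⟨j / 2, (j % 2).toNat, by omega, by omega⟩
  have hxj : x ^ ((e : ℤ) + 2 * l) = x ^ e * (x ^ 2) ^ l := by
    rw [zpow_add, zpow_mul, zpow_natCast, zpow_ofNat]
  rw [hxj, ← mul_assoc (y ^ i * w)] at hρ ⊢
  rw [map_mul, Subgroup.mul_mem_cancel_left _ (hcenter m), map_mul,
    Subgroup.mul_mem_cancel_right _ (hcenter l)] at hρ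
  obtain ⟨rfl, rfl, rfl⟩ := eq_one_of_map_mem_center hx hy hw hi he hρ
  simpa using mul_mem (zpow_mem (Subgroup.mem_zpowers (x ^ 2)) m)
    (zpow_mem (Subgroup.mem_zpowers (x ^ 2)) l)

end ModularRepresentation

section BraidGroupThree

open ModularGroup Matrix.SpecialLinearGroup
open scoped MatrixGroups commutatorElement

theorem esum_one {m : ℕ} : esum (1 : BraidGroup m) = 0 := by
  rw [esum, map_one, toAdd_one]

theorem esum_mul {m : ℕ} (a b : BraidGroup m) : esum (a * b) = esum a + esum b := by
  rw [esum, map_mul, toAdd_mul, esum, esum]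

theorem esum_inv {m : ℕ} (a : BraidGroup m) : esum a⁻¹ = -esum a := by
  rw [esum, map_inv, toAdd_inv, esum]

theorem esum_pow {m : ℕ} (a : BraidGroup m) (k : ℕ) : esum (a ^ k) = k * esum a := by
  rw [esum, map_pow, toAdd_pow, nsmul_eq_mul, esum]

theorem esum_zpow {m : ℕ} (a : BraidGroup m) (k : ℤ) : esum (a ^ k) = k * esum a := by
  rw [esum, map_zpow, toAdd_zpow, smul_eq_mul, esum]

theorem esum_of {m : ℕ} (i : Fin (m - 1)) : esum (PresentedGroup.of i : BraidGroup m) = 1 := by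
  rw [esum, expSumHom, PresentedGroup.toGroup.of, toAdd_ofAdd]

theorem esum_commutator {m : ℕ} (a b : BraidGroup m) : esum ⁅a, b⁆ = 0 := by
  rw [commutatorElement_def, esum_mul, esum_mul, esum_mul, esum_inv, esum_inv]
  ring

/-- The first Artin generator of `BraidGroup 3`, indexed by `0`. -/
def sigmaOne : BraidGroup 3 := PresentedGroup.of 0

/-- The second Artin generator of `BraidGroup 3`, indexed by `1`. -/
def sigmaTwo : BraidGroup 3 := PresentedGroup.of 1

theorem sigma_braid_relation : sigmaOne * sigmaTwo * sigmaOne = sigmaTwo * sigmaOne * sigmaTwo :=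
  PresentedGroup.mk_eq_mk_of_mul_inv_mem (Or.inr ⟨0, 1, Or.inl rfl, rfl⟩)

/-- The half twist `Δ = σ₁σ₂σ₁`; its square generates the centre of `BraidGroup 3`. -/
def halfTwist : BraidGroup 3 := sigmaOne * sigmaTwo * sigmaOne

/-- The braid `σ₁σ₂`, a rotation by one third of a turn and hence a cube root of the full twist. -/
def thirdTwist : BraidGroup 3 := sigmaOne * sigmaTwo

theorem halfTwist_sq_eq_thirdTwist_cube : halfTwist ^ 2 = thirdTwist ^ 3 := by
  calc halfTwist ^ 2
      = sigmaOne * sigmaTwo * sigmaOne * (sigmaOne * sigmaTwo * sigmaOne) := pow_two _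
    _ = sigmaOne * sigmaTwo * sigmaOne * (sigmaTwo * sigmaOne * sigmaTwo) := by
      rw [← sigma_braid_relation]
    _ = thirdTwist ^ 3 := by simp only [thirdTwist, pow_succ, pow_zero, one_mul, mul_assoc]

theorem closure_halfTwist_thirdTwist :
    Subgroup.closure {halfTwist, thirdTwist} = (⊤ : Subgroup (BraidGroup 3)) := by
  have hhalf : halfTwist ∈ Subgroup.closure {halfTwist, thirdTwist} :=
    Subgroup.subset_closure (Set.mem_insert _ _)
  have hthird : thirdTwist ∈ Subgroup.closure {halfTwist, thirdTwist} :=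
    Subgroup.subset_closure (Set.mem_insert_of_mem _ rfl)
  have hone : sigmaOne ∈ Subgroup.closure {halfTwist, thirdTwist} := by
    have h := mul_mem (inv_mem hthird) hhalf
    rwa [halfTwist, ← thirdTwist, inv_mul_cancel_left] at h
  have htwo : sigmaTwo ∈ Subgroup.closure {halfTwist, thirdTwist} := by
    have h := mul_mem (inv_mem hone) hthird
    rwa [thirdTwist, inv_mul_cancel_left] at h
  rw [eq_top_iff, ← PresentedGroup.closure_range_of, Subgroup.closure_le]
  rintro _ ⟨i, rfl⟩
  fin_cases i
  exacts [hone, htwo]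

/-- The reduced Burau representation of `BraidGroup 3` at `t = -1`, in coordinates in which
`halfTwist` and `thirdTwist` act by `S` and `S * T`. -/
def modularRep : BraidGroup 3 →* SL(2, ℤ) :=
  PresentedGroup.toGroup (f := ![T⁻¹, T * S * T]) (by
    have hrel : T⁻¹ * (T * S * T) * T⁻¹ = T * S * T * T⁻¹ * (T * S * T) := by decide
    rintro r (⟨i, j, hij, rfl⟩ | ⟨i, j, hij, rfl⟩)
    · omega
    · simp only [map_mul, map_inv, FreeGroup.lift_apply_of, mul_inv_eq_one]
      fin_cases i <;> fin_cases j <;> simp at hij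
      exacts [hrel, hrel.symm])

theorem modularRep_sigmaOne : modularRep sigmaOne = T⁻¹ :=
  PresentedGroup.toGroup.of _

theorem modularRep_sigmaTwo : modularRep sigmaTwo = T * S * T :=
  PresentedGroup.toGroup.of _

theorem modularRep_thirdTwist : modularRep thirdTwist = S * T := by
  rw [thirdTwist, map_mul, modularRep_sigmaOne, modularRep_sigmaTwo, mul_assoc,
    inv_mul_cancel_left]

theorem modularRep_halfTwist : modularRep halfTwist = S := by
  rw [halfTwist, map_mul, ← thirdTwist, modularRep_thirdTwist, modularRep_sigmaOne,
    mul_inv_cancel_right]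

theorem mem_zpowers_of_modularRep_mem_center {g : BraidGroup 3}
    (hg : modularRep g ∈ Subgroup.center SL(2, ℤ)) : g ∈ Subgroup.zpowers (halfTwist ^ 2) :=
  mem_zpowers_of_map_mem_center modularRep_halfTwist modularRep_thirdTwist
    halfTwist_sq_eq_thirdTwist_cube (closure_halfTwist_thirdTwist ▸ Subgroup.mem_top g) hg

theorem esum_halfTwist : esum halfTwist = 3 := by
  rw [halfTwist, esum_mul, esum_mul, sigmaOne, sigmaTwo, esum_of, esum_of]
  norm_num

theorem esum_halfTwist_sq_zpow (k : ℤ) : esum ((halfTwist ^ 2) ^ k) = 6 * k := by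
  rw [esum_zpow, esum_pow, esum_halfTwist]
  push_cast
  ring

theorem commute_of_commute_modularRep {a b : BraidGroup 3}
    (h : Commute (modularRep a) (modularRep b)) : Commute a b := by
  rw [← commutatorElement_eq_one_iff_commute, ← map_commutatorElement] at h
  obtain ⟨k, hk⟩ := Subgroup.mem_zpowers_iff.1
    (mem_zpowers_of_modularRep_mem_center (h ▸ one_mem (Subgroup.center SL(2, ℤ))))
  have hk0 : 6 * k = 0 := by rw [← esum_halfTwist_sq_zpow, hk, esum_commutator]
  rw [← commutatorElement_eq_one_iff_commute, ← hk, show k = 0 by omega, zpow_zero]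

/-- The braids of even exponent sum. -/
def evenBraids : Subgroup (BraidGroup 3) where
  carrier := {g | Even (esum g)}
  one_mem' := by simp [esum_one]
  mul_mem' {a b} ha hb := by
    simpa only [Set.mem_ofPred_eq, esum_mul] using ha.add hb
  inv_mem' {a} ha := by simpa only [Set.mem_ofPred_eq, esum_inv] using ha.neg

theorem mem_evenBraids {g : BraidGroup 3} : g ∈ evenBraids ↔ Even (esum g) :=
  Iff.rfl

/-- `modularRep` twisted by the character `g ↦ (-1) ^ (esum g / 2)` of `evenBraids`. The twist
makes `halfTwist ^ 2`, which `modularRep` sends to `-1`, act trivially. -/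
def signedRep : evenBraids →* SL(2, ℤ) where
  toFun g := (-1) ^ (esum g.1 / 2) * modularRep g.1
  map_one' := by simp [esum_one]
  map_mul' a b := by
    have hdiv : esum (a.1 * b.1) / 2 = esum a.1 / 2 + esum b.1 / 2 := by
      rw [esum_mul, Int.add_ediv_of_dvd_left a.2.two_dvd]
    have hcomm : Commute ((-1) ^ (esum b.1 / 2)) (modularRep a.1) :=
      (Subgroup.mem_center_iff.1 (neg_one_zpow_mem_center _) _).symm
    rw [Subgroup.coe_mul, hdiv, zpow_add, map_mul, hcomm.mul_mul_mul_comm]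

theorem signedRep_apply (g : evenBraids) :
    signedRep g = (-1) ^ (esum g.1 / 2) * modularRep g.1 :=
  rfl

theorem neg_one_notMem_range_signedRep : -1 ∉ signedRep.range := by
  rintro ⟨⟨g, hg⟩, hneg⟩
  rw [signedRep_apply] at hneg
  have hcenter : modularRep g ∈ Subgroup.center SL(2, ℤ) := by
    rw [← Subgroup.mul_mem_cancel_left _ (neg_one_zpow_mem_center (esum g / 2)), hneg,
      ← zpow_one (-1)]
    exact neg_one_zpow_mem_center 1
  obtain ⟨k, rfl⟩ := mem_zpowers_of_modularRep_mem_center hcenter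
  have hdiv : esum ((halfTwist ^ 2) ^ k) / 2 = k + 2 * k := by
    rw [esum_halfTwist_sq_zpow]
    omega
  rw [hdiv, map_zpow, map_pow, modularRep_halfTwist, pow_two, S_mul_S, ← zpow_add,
    show k + 2 * k + k = 2 * (2 * k) by ring, zpow_mul, zpow_ofNat, neg_one_sq, one_zpow] at hneg
  exact absurd hneg (by decide)

theorem commute_of_commute_signedRep {a b : evenBraids}
    (h : Commute (signedRep a) (signedRep b)) : Commute a b := by
  rw [signedRep_apply, signedRep_apply] at h
  exact Subtype.ext (commute_of_commute_modularRep (commute_of_commute_mul_of_mem_center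
    (neg_one_zpow_mem_center _) (neg_one_zpow_mem_center _) h))

end BraidGroupThree

section ExponentSums

theorem even_of_modEq_zero {x : ℤ} (h : Int.ModEq 6 x 0) : Even x := by
  rw [Int.even_iff]
  rw [Int.ModEq] at h
  omega

theorem PMTwo.even {x : ℤ} (h : PMTwo x) : Even x := by
  rw [Int.even_iff]
  rw [PMTwo, Int.ModEq, Int.ModEq] at h
  omega

theorem forall_fin_three {P : Fin 3 → Prop} : (∀ p, P p) ↔ P 0 ∧ P 1 ∧ P 2 := by
  simp [Fin.forall_fin_succ]

theorem Is33Periodic.forall_pmOne_or_forall_even {s : Fin 3 → BraidGroup 3}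
    (h : Is33Periodic s) : (∀ p, PMOne (esum (s p))) ∨ ∀ p, Even (esum (s p)) := by
  rw [forall_fin_three, forall_fin_three]
  rcases h with ⟨h0, h1, h2⟩ | ⟨h0, h1, h2⟩ | ⟨h0, h1, h2⟩ | h
  · exact Or.inr ⟨even_of_modEq_zero h0, h1.even, h2.even⟩
  · exact Or.inr ⟨h0.even, even_of_modEq_zero h1, h2.even⟩
  · exact Or.inr ⟨h0.even, h1.even, even_of_modEq_zero h2⟩
  · exact Or.inl h

theorem period33_exponent_sums_general {s : Fin 3 → BraidGroup 3} (hs : ¬IsReducible s)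
    (hfin : (hurwitzOrbit s).Finite) : ∃ p, Odd (esum (s p)) := by
  by_contra! hodd
  have heven (p : Fin 3) : s p ∈ evenBraids :=
    mem_evenBraids.2 (Int.not_odd_iff_even.1 (hodd p))
  obtain ⟨t, rfl⟩ : ∃ t : Fin 3 → evenBraids, s = evenBraids.subtype ∘ t :=
    ⟨fun p => ⟨s p, heven p⟩, rfl⟩
  have ht : (hurwitzOrbit t).Finite := by
    rw [hurwitzOrbit_comp] at hfin
    exact hfin.of_finite_image evenBraids.subtype_injective.comp_left.injOn
  have hsigned : (hurwitzOrbit (signedRep ∘ t)).Finite := by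
    rw [hurwitzOrbit_comp]
    exact ht.image _
  have hred : IsReducible (signedRep ∘ t) := isReducible_of_finite_hurwitzOrbit
    neg_one_notMem_range_signedRep (fun p => ⟨t p, rfl⟩) hsigned
  exact hs (hred.of_commute fun i j hij =>
    (commute_of_commute_signedRep hij).map evenBraids.subtype)

end ExponentSums

/-- No irreducible system with finite Hurwitz orbit has exponent sums
congruent (mod 6, in some order) to `(0, ±2, ±2)`; consequently, every irreducible
`(3,3)`-periodic system with finite Hurwitz orbit has all exponent sums `≡ ±1 (mod 6)`. -/
theorem period33_exponent_sums :
    (∀ s : Fin 3 → BraidGroup 3, ¬ IsReducible s → (hurwitzOrbit s).Finite →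
      ¬ ∃ σ : Equiv.Perm (Fin 3),
          Int.ModEq 6 (esum (s (σ 0))) 0 ∧ PMTwo (esum (s (σ 1))) ∧
            PMTwo (esum (s (σ 2)))) ∧
    (∀ s : Fin 3 → BraidGroup 3, ¬ IsReducible s → (hurwitzOrbit s).Finite →
      Is33Periodic s → ∀ p : Fin 3, PMOne (esum (s p))) := by
  refine ⟨fun s hs hfin ⟨σ, h0, h1, h2⟩ => ?_, fun s hs hfin hper => ?_⟩ <;>
    obtain ⟨p, hp⟩ := period33_exponent_sums_general hs hfin
  · obtain ⟨q, rfl⟩ := σ.surjective p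
    have heven : ∀ q, Even (esum (s (σ q))) := forall_fin_three.2
      ⟨even_of_modEq_zero h0, h1.even, h2.even⟩
    exact Int.not_even_iff_odd.2 hp (heven q)
  · exact hper.forall_pmOne_or_forall_even.resolve_right
      fun heven => Int.not_even_iff_odd.2 hp (heven p)
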